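/- Let I ⊂ S be a monomial ideal generated in degree d with minimal monomial generating set B = G(I), let <^# be a monomial order on R = K[{T_u}_{u∈B}] and <_σ a monomial order on S, and suppose B satisfies the σ-exchange property with respect to <^#. Then for every N ≥ 1 the power I^N has linear quotients with respect to the order of its minimal monomial generators w_1, …, w_r given by w_1 >_σ w_2 >_σ ⋯ >_σ w_r. -/

import Mathlib

/-!
The fibre of `e ↦ expandB e` over a generator `w` of `I ^ N` contains a standard monomial. Indeed,
among the finitely many monomials `T_{u_1} ⋯ T_{u_N}` of `R` that map to `w`, the smallest one for
the order on `R` cannot lead an element `f` of the toric ideal: the coefficient of `w` in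
`π f = 0` is the sum of the coefficients of `f` over the fibre of `w`, so a leading term in that
fibre has to be cancelled by a smaller one (`isStd_of_min`, `exists_std`). When `d > 0`, degrees force all monomials
in the fibre to have the same number `N` of factors; when `d = 0` the only generator is `1`.

For generators `w_i <_σ w_j`, the exchange property applied to standard monomials over `w_i` and
`w_j` yields `q`, `p` and a factor `u` of `w_i` with `x_q u / x_p ∈ B`. Then `w_k = x_q w_i / x_p`
is again a product of `N` elements of `B`, it is larger than `w_i` because `x_p <_σ x_q`, and
`w_k / gcd (w_k, w_i) = x_q` divides `w_j / gcd (w_j, w_i)` because `ν_q(w_i) < ν_q(w_j)`.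
-/

/-- Monomials of `K[x_1,…,x_n]`, encoded by their exponent vectors (`x_1` ↔ index `0`). -/
abbrev Mon (n : ℕ) := Fin n →₀ ℕ

/-- Total degree of a monomial. -/
def mdeg {n : ℕ} (m : Mon n) : ℕ := ∑ i, m i

/-- `m <_lex m'` (so `m' >_lex m`) with `x_1 > x_2 > ⋯ > x_n`: at the first index where the
exponent vectors differ, `m'` has the larger exponent. -/
def LexLT {n : ℕ} (m m' : Mon n) : Prop :=
  ∃ i : Fin n, (∀ j, j < i → m j = m' j) ∧ m i < m' i

/-- `m ≤_lex m'`. -/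
def LexLE {n : ℕ} (m m' : Mon n) : Prop := m = m' ∨ LexLT m m'

/-- `m >_revlex m'` for monomials of equal degree: at the last index where the exponent
vectors differ, `m` has the smaller exponent. -/
def RevLexGT {n : ℕ} (m m' : Mon n) : Prop :=
  ∃ s : Fin n, (∀ t, s < t → m t = m' t) ∧ m s < m' s

/-- The decreasing revlexicographic order on monomials: `m <_σ m'` iff `deg m < deg m'`, or
the degrees agree and `m >_revlex m'`. -/
def DecRevLexLT {n : ℕ} (m m' : Mon n) : Prop :=
  mdeg m < mdeg m' ∨ (mdeg m = mdeg m' ∧ RevLexGT m m')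

/-- The lexsegment set `L(u,v) = {w ∈ M_d : u ≥_lex w ≥_lex v}`. -/
def LSeg {n : ℕ} (u v : Mon n) (d : ℕ) : Set (Mon n) :=
  {w | mdeg w = d ∧ LexLE w u ∧ LexLE v w}

/-- `A` is a lexsegment set inside `M_e`. -/
def IsLexSegmentSet {n : ℕ} (A : Set (Mon n)) (e : ℕ) : Prop :=
  ∃ u v : Mon n, mdeg u = e ∧ mdeg v = e ∧ LexLE v u ∧ A = LSeg u v e

/-- `(L(u,v))` is a completely lexsegment ideal: for every `k ≥ 0` the `k`-th shadow
`{m·w : m ∈ M_k, w ∈ L(u,v)}` is a lexsegment set in `M_{d+k}`. -/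
def IsCompletelyLex {n : ℕ} (u v : Mon n) (d : ℕ) : Prop :=
  ∀ k : ℕ,
    IsLexSegmentSet {w | ∃ m w₀, mdeg m = k ∧ w₀ ∈ LSeg u v d ∧ w = m + w₀} (d + k)

/-- The set of products of `N` monomials from `B`; for `B` a set of monomials of a fixed
degree `d` this is the minimal monomial generating set of `I^N`, `I = (B)`. -/
def prodSet {n : ℕ} (B : Set (Mon n)) (N : ℕ) : Set (Mon n) :=
  {m | ∃ f : Fin N → Mon n, (∀ i, f i ∈ B) ∧ m = ∑ i, f i}

/-- The equigenerated monomial ideal with (minimal) monomial generating set `G` has linear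
quotients with respect to the order given by `prec` (`prec a b` = "`a` is listed before
`b`"): for generators `u_j` before `u_i` there are a generator `u_k` before `u_i` and a
variable `x_q` with `u_k / gcd(u_k,u_i) = x_q` and `x_q ∣ u_j / gcd(u_j,u_i)`. -/
def LinQuotOrder {n : ℕ} (G : Set (Mon n)) (prec : Mon n → Mon n → Prop) : Prop :=
  ∀ uj ∈ G, ∀ ui ∈ G, prec uj ui →
    ∃ uk ∈ G, prec uk ui ∧ ∃ q : Fin n,
      (∀ p : Fin n, p ≠ q → uk p ≤ ui p) ∧ uk q = ui q + 1 ∧ ui q < uj q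

/-- The equigenerated monomial ideal with minimal monomial generating set `G` has linear
quotients (with respect to some linear order of the generators). -/
def HasLinQuot {n : ℕ} (G : Set (Mon n)) : Prop :=
  ∃ prec : Mon n → Mon n → Prop,
    (∀ a ∈ G, ¬ prec a a) ∧
    (∀ a ∈ G, ∀ b ∈ G, ∀ c ∈ G, prec a b → prec b c → prec a c) ∧
    (∀ a ∈ G, ∀ b ∈ G, a ≠ b → prec a b ∨ prec b a) ∧
    LinQuotOrder G prec
/-- A monomial order on a polynomial ring with variables indexed by `α`, given as a strict
total order on exponent vectors which is compatible with multiplication of monomials and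
for which `1` is the smallest monomial. -/
structure MonOrd (α : Type*) where
  lt : (α →₀ ℕ) → (α →₀ ℕ) → Prop
  irrefl : ∀ a, ¬ lt a a
  trans : ∀ a b c, lt a b → lt b c → lt a c
  total : ∀ a b, a ≠ b → lt a b ∨ lt b a
  add_right : ∀ a b c, lt a b → lt (a + c) (b + c)
  zero_lt : ∀ a, a ≠ 0 → lt 0 a

/-- The map `π : R = K[{T_u}_{u ∈ B}] → S`, `T_u ↦ u`. -/
noncomputable def piB {n : ℕ} (K : Type*) [Field K] (B : Set (Mon n)) :
    MvPolynomial ↥B K →ₐ[K] MvPolynomial (Fin n) K :=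
  MvPolynomial.aeval (fun u : ↥B => MvPolynomial.monomial (u : Mon n) (1 : K))

/-- The toric ideal `J = ker π` of `K[B]`. -/
noncomputable def toricJ {n : ℕ} (K : Type*) [Field K] (B : Set (Mon n)) :
    Ideal (MvPolynomial ↥B K) :=
  RingHom.ker (piB K B).toRingHom

/-- `m` is the leading monomial of `f ≠ 0` with respect to the order `lt` on exponent
vectors. -/
def IsLeadMon {α K : Type*} [CommSemiring K] (lt : (α →₀ ℕ) → (α →₀ ℕ) → Prop)
    (f : MvPolynomial α K) (m : α →₀ ℕ) : Prop :=
  m ∈ f.support ∧ ∀ m' ∈ f.support, m' ≠ m → lt m' m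

/-- `m` is a standard monomial of the ideal `J` with respect to the order `lt`: it is not
the leading monomial of any nonzero element of `J`. -/
def IsStdMon {α K : Type*} [CommSemiring K] (lt : (α →₀ ℕ) → (α →₀ ℕ) → Prop)
    (J : Ideal (MvPolynomial α K)) (m : α →₀ ℕ) : Prop :=
  ∀ f ∈ J, f ≠ 0 → ¬ IsLeadMon lt f m

/-- The image in `S` of a monomial `T_{u_1} ⋯ T_{u_N}` of `R`, i.e. the product
`u_1 ⋯ u_N`. -/
noncomputable def expandB {n : ℕ} {B : Set (Mon n)} (e : ↥B →₀ ℕ) : Mon n :=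
  e.sum fun u k => k • (u : Mon n)

/-- The number `N` of factors of a monomial `T_{u_1} ⋯ T_{u_N}` of `R`. -/
def edeg {n : ℕ} {B : Set (Mon n)} (e : ↥B →₀ ℕ) : ℕ := e.sum fun _ k => k

/-- `B` satisfies the σ-exchange property (with respect to the order `ltσ` on the monomials
of `S` and the order `ltR` on the monomials of `R = K[{T_u}_{u∈B}]`): whenever
`T_{u_1}⋯T_{u_N}` and `T_{v_1}⋯T_{v_N}` are standard monomials of `J` with
`u_1⋯u_N <_σ v_1⋯v_N`, there are a factor `u_δ`, a `q ∈ supp(v_1⋯v_N)` and a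
`j ∈ supp(u_δ)` with `ν_q(u_1⋯u_N) < ν_q(v_1⋯v_N)`, `x_j <_σ x_q` and
`x_q u_δ / x_j ∈ B`. -/
def SigmaExchange {n : ℕ} (K : Type*) [Field K] (B : Set (Mon n))
    (ltσ : Mon n → Mon n → Prop)
    (ltR : (↥B →₀ ℕ) → (↥B →₀ ℕ) → Prop) : Prop :=
  ∀ e e' : ↥B →₀ ℕ, edeg e = edeg e' →
    IsStdMon ltR (toricJ K B) e → IsStdMon ltR (toricJ K B) e' →
    ltσ (expandB e) (expandB e') →
    ∃ uδ : ↥B, 0 < e uδ ∧ ∃ q j : Fin n,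
      expandB e q < expandB e' q ∧
      0 < (uδ : Mon n) j ∧
      ltσ (Finsupp.single j 1) (Finsupp.single q 1) ∧
      ((uδ : Mon n) + Finsupp.single q 1 - Finsupp.single j 1) ∈ B

/-- The map `φ : 𝒯 = K[x_1,…,x_n,{T_u}_{u∈B}] → S[t]`, `x_i ↦ x_i`, `T_u ↦ u·t`; its image
is the Rees algebra of `I = (B)`. -/
noncomputable def reesPhi {n : ℕ} (K : Type*) [Field K] (B : Set (Mon n)) :
    MvPolynomial (Fin n ⊕ ↥B) K →ₐ[K] Polynomial (MvPolynomial (Fin n) K) :=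
  MvPolynomial.aeval (Sum.elim
    (fun i : Fin n => Polynomial.C (MvPolynomial.X i))
    (fun u : ↥B => Polynomial.C (MvPolynomial.monomial (u : Mon n) (1 : K)) * Polynomial.X))

/-- The toric ideal `P = ker φ` of the Rees algebra of `I = (B)`. -/
noncomputable def reesP {n : ℕ} (K : Type*) [Field K] (B : Set (Mon n)) :
    Ideal (MvPolynomial (Fin n ⊕ ↥B) K) :=
  RingHom.ker (reesPhi K B).toRingHom

/-- `f ∈ 𝒯` only involves the variables `T_u`, i.e. `f ∈ K[{T_u}_{u∈B}]`. -/
def OnlyT {n : ℕ} {K : Type*} [Field K] {B : Set (Mon n)}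
    (f : MvPolynomial (Fin n ⊕ ↥B) K) : Prop :=
  ∀ m ∈ f.support, ∀ i : Fin n, m (Sum.inl i) = 0

/-- `f ∈ 𝒯` is homogeneous of degree `1` in the variables `T_u`. -/
def TDegOne {n : ℕ} {K : Type*} [Field K] {B : Set (Mon n)}
    (f : MvPolynomial (Fin n ⊕ ↥B) K) : Prop :=
  ∀ m ∈ f.support, (∑ s ∈ m.support, if s.isRight then m s else 0) = 1

/-- The monomial ideal `I = (B)` is of fiber type: the toric ideal `P` of its Rees algebra
is generated by `P ∩ K[{T_u}_{u∈B}]` together with the elements of `P` homogeneous of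
degree `1` in the variables `T_u`. -/
def IsFiberType {n : ℕ} (K : Type*) [Field K] (B : Set (Mon n)) : Prop :=
  reesP K B =
    Ideal.span ({f | f ∈ reesP K B ∧ OnlyT f} ∪ {f | f ∈ reesP K B ∧ TDegOne f})

/-- The `S`-part of a monomial of `𝒯`. -/
noncomputable def sPart {n : ℕ} {B : Set (Mon n)} (m : (Fin n ⊕ ↥B) →₀ ℕ) : Mon n :=
  (Finsupp.sumFinsuppEquivProdFinsupp m).1

/-- The `T`-part of a monomial of `𝒯`. -/
noncomputable def tPart {n : ℕ} {B : Set (Mon n)} (m : (Fin n ⊕ ↥B) →₀ ℕ) : ↥B →₀ ℕ :=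
  (Finsupp.sumFinsuppEquivProdFinsupp m).2

/-- The product order `<_σ^#` on the monomials of `𝒯 = K[x_1,…,x_n,{T_u}_{u∈B}]`. -/
def ProdLT {n : ℕ} {B : Set (Mon n)} (ltσ : Mon n → Mon n → Prop)
    (ltR : (↥B →₀ ℕ) → (↥B →₀ ℕ) → Prop)
    (m m' : (Fin n ⊕ ↥B) →₀ ℕ) : Prop :=
  ltσ (sPart m) (sPart m') ∨ (sPart m = sPart m' ∧ ltR (tPart m) (tPart m'))

/-- `G` is a Gröbner basis of the ideal `P` with respect to the order `lt`: the leading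
monomial of every nonzero `f ∈ P` is divisible by the leading monomial of some element
of `G`. -/
def IsGB {α K : Type*} [CommSemiring K] (lt : (α →₀ ℕ) → (α →₀ ℕ) → Prop)
    (P : Ideal (MvPolynomial α K)) (G : Set (MvPolynomial α K)) : Prop :=
  ∀ f ∈ P, f ≠ 0 → ∃ g ∈ G, g ≠ 0 ∧
    ∃ mg mf, IsLeadMon lt g mg ∧ IsLeadMon lt f mf ∧ mg ≤ mf


lemma expandB_add {n : ℕ} {B : Set (Mon n)} (e e' : ↥B →₀ ℕ) :
    expandB (e + e') = expandB e + expandB e' :=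
  Finsupp.sum_add_index' (by simp) (by intros; simp [add_smul])

lemma edeg_add {n : ℕ} {B : Set (Mon n)} (e e' : ↥B →₀ ℕ) :
    edeg (e + e') = edeg e + edeg e' :=
  Finsupp.sum_add_index' (by simp) (by intros; simp)

lemma expandB_single {n : ℕ} {B : Set (Mon n)} (u : ↥B) :
    expandB (Finsupp.single u 1) = (u : Mon n) := by
  simp [expandB]

lemma edeg_single {n : ℕ} {B : Set (Mon n)} (u : ↥B) :
    edeg (Finsupp.single u 1) = 1 := by
  simp [edeg]

lemma exists_eq_add_single {α : Type*} (e : α →₀ ℕ) (u : α) (h : 0 < e u) :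
    ∃ e', e = e' + Finsupp.single u 1 :=
  ⟨e - Finsupp.single u 1, (tsub_add_cancel_of_le (by
    rw [Finsupp.single_le_iff]; exact h)).symm⟩

lemma edeg_zero {n : ℕ} {B : Set (Mon n)} : edeg (0 : ↥B →₀ ℕ) = 0 := by
  simp [edeg]

lemma expandB_zero {n : ℕ} {B : Set (Mon n)} : expandB (0 : ↥B →₀ ℕ) = 0 := by
  simp [expandB]

lemma add_mem_prodSet {n : ℕ} {B : Set (Mon n)} {N : ℕ} {a b : Mon n}
    (ha : a ∈ prodSet B N) (hb : b ∈ B) : a + b ∈ prodSet B (N + 1) := by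
  obtain ⟨f, hf, rfl⟩ := ha
  refine ⟨Fin.cons b f, fun i => ?_, ?_⟩
  · refine Fin.cases ?_ (fun i => ?_) i
    · simpa using hb
    · simpa using hf i
  · rw [Fin.sum_univ_succ]
    simp [add_comm]

lemma expandB_mem_prodSet {n : ℕ} {B : Set (Mon n)} (N : ℕ) :
    ∀ e : ↥B →₀ ℕ, edeg e = N → expandB e ∈ prodSet B N := by
  induction N with
  | zero =>
    intro e he
    have h0 : e = 0 := by
      by_contra hne
      obtain ⟨u, hu⟩ := Finsupp.ne_iff.mp hne
      obtain ⟨e', rfl⟩ := exists_eq_add_single e u (Nat.pos_of_ne_zero hu)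
      rw [edeg_add, edeg_single] at he
      omega
    subst h0
    exact ⟨Fin.elim0, fun i => i.elim0, by simp [expandB_zero]⟩
  | succ N ih =>
    intro e he
    have hne : e ≠ 0 := by
      rintro rfl
      rw [edeg_zero] at he
      omega
    obtain ⟨u, hu⟩ := Finsupp.ne_iff.mp hne
    obtain ⟨e', rfl⟩ := exists_eq_add_single e u (Nat.pos_of_ne_zero hu)
    rw [edeg_add, edeg_single] at he
    rw [expandB_add, expandB_single]
    exact add_mem_prodSet (ih e' (by omega)) u.2

lemma exists_expandB_of_mem {n : ℕ} {B : Set (Mon n)} (N : ℕ) :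
    ∀ w ∈ prodSet B N, ∃ e : ↥B →₀ ℕ, edeg e = N ∧ expandB e = w := by
  induction N with
  | zero =>
    rintro w ⟨f, hf, rfl⟩
    exact ⟨0, edeg_zero, by simp [expandB_zero]⟩
  | succ N ih =>
    rintro w ⟨f, hf, rfl⟩
    obtain ⟨e, he, hw⟩ := ih _ ⟨fun i => f i.succ, fun i => hf _, rfl⟩
    refine ⟨e + Finsupp.single ⟨f 0, hf 0⟩ 1, ?_, ?_⟩
    · rw [edeg_add, edeg_single, he]
    · rw [expandB_add, expandB_single, hw, Fin.sum_univ_succ, add_comm]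

lemma mdeg_expandB {n : ℕ} {B : Set (Mon n)} {d : ℕ} (hBd : ∀ m ∈ B, mdeg m = d) (N : ℕ) :
    ∀ e : ↥B →₀ ℕ, edeg e = N → mdeg (expandB e) = N * d := by
  intro e he
  obtain ⟨f, hf, h⟩ := expandB_mem_prodSet N e he
  rw [h]
  have h1 : mdeg (∑ i, f i) = ∑ i, mdeg (f i) := by
    simp only [mdeg, Finsupp.finsetSum_apply]
    exact Finset.sum_comm
  rw [h1, Finset.sum_congr rfl fun i _ => hBd _ (hf i)]
  simp

/-- Only finitely many exponent vectors on a finite set of variables are bounded by `N`. -/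
lemma finite_bounded {α : Type*} [Finite α] (N : ℕ) :
    {e : α →₀ ℕ | ∀ a, e a ≤ N}.Finite := by
  exact (Set.Finite.pi' fun _ : α => Set.finite_Iic N).preimage DFunLike.coe_injective.injOn

lemma finite_of_mdeg {n : ℕ} {B : Set (Mon n)} {d : ℕ} (hBd : ∀ m ∈ B, mdeg m = d) :
    B.Finite := by
  refine (finite_bounded d).subset fun m hm a => ?_
  rw [← hBd m hm]
  exact Finset.single_le_sum (f := fun i => m i) (fun _ _ => Nat.zero_le _) (Finset.mem_univ a)

lemma le_edeg {n : ℕ} {B : Set (Mon n)} (e : ↥B →₀ ℕ) (a : ↥B) : e a ≤ edeg e := by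
  rcases Nat.eq_zero_or_pos (e a) with h | h
  · omega
  · exact Finset.single_le_sum (f := fun i => e i) (fun _ _ => Nat.zero_le _)
      (Finsupp.mem_support_iff.mpr h.ne')

lemma piB_apply {n : ℕ} (K : Type*) [Field K] (B : Set (Mon n)) (f : MvPolynomial ↥B K) :
    piB K B f = ∑ m ∈ f.support, MvPolynomial.monomial (expandB m) (f.coeff m) := by
  rw [piB, MvPolynomial.aeval_def, MvPolynomial.eval₂_eq]
  refine Finset.sum_congr rfl fun m _ => ?_
  simp only [MvPolynomial.monomial_pow, one_pow]
  rw [← MvPolynomial.monomial_sum_one, MvPolynomial.algebraMap_eq, MvPolynomial.C_mul_monomial,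
    mul_one]
  rfl

/-- A monomial that is smallest in its fibre under `T_u ↦ u` is standard for the toric ideal. -/
lemma isStd_of_min {n : ℕ} (K : Type*) [Field K] (B : Set (Mon n)) (o : MonOrd ↥B)
    (e : ↥B →₀ ℕ) (hmin : ∀ m, expandB m = expandB e → ¬ o.lt m e) :
    IsStdMon o.lt (toricJ K B) e := by
  classical
  rintro f hf - ⟨hes, hlead⟩
  have h0 : piB K B f = 0 := hf
  rw [piB_apply] at h0
  have h1 := congrArg (MvPolynomial.coeff (expandB e)) h0
  rw [MvPolynomial.coeff_sum, Finset.sum_eq_single_of_mem e hes] at h1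
  · rw [MvPolynomial.coeff_monomial, if_pos rfl, MvPolynomial.coeff_zero] at h1
    exact MvPolynomial.mem_support_iff.mp hes h1
  · intro m hm hne
    rw [MvPolynomial.coeff_monomial, if_neg]
    exact fun h => hmin m h (hlead m hm hne)

/-- Every product of `N` elements of `B` is the image of a standard monomial with `N` factors. -/
lemma exists_std {n : ℕ} (K : Type*) [Field K] {d : ℕ} (hd : 0 < d) (B : Set (Mon n))
    (hBd : ∀ m ∈ B, mdeg m = d) (o : MonOrd ↥B) (N : ℕ) (w : Mon n) (hw : w ∈ prodSet B N) :
    ∃ e : ↥B →₀ ℕ, edeg e = N ∧ expandB e = w ∧ IsStdMon o.lt (toricJ K B) e := by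
  have : Finite ↥B := (finite_of_mdeg hBd).to_subtype
  let F : Set (↥B →₀ ℕ) := {e | edeg e = N ∧ expandB e = w}
  have hF : F.Finite := (finite_bounded N).subset fun e he a => he.1 ▸ le_edeg e a
  have : Finite F := hF.to_subtype
  obtain ⟨e₀, h₀⟩ := exists_expandB_of_mem N w hw
  let r : F → F → Prop := fun a b => o.lt a b
  have : Std.Irrefl r := ⟨fun a => o.irrefl a⟩
  have : IsTrans F r := ⟨fun a b c => o.trans a b c⟩
  obtain ⟨⟨e, he⟩, -, hmin⟩ :=
    (Finite.wellFounded_of_trans_of_irrefl r).has_min Set.univ ⟨⟨e₀, h₀⟩, trivial⟩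
  refine ⟨e, he.1, he.2, isStd_of_min K B o e fun m hm => ?_⟩
  have hdeg : edeg m = N := by
    have h1 := mdeg_expandB hBd _ m rfl
    have h2 := mdeg_expandB hBd _ e he.1
    rw [hm, h2] at h1
    exact (Nat.eq_of_mul_eq_mul_right hd h1).symm
  exact hmin ⟨m, hdeg, hm.trans he.2⟩ trivial

/-- if the minimal monomial generating set `B` of a monomial ideal `I ⊂ S`
generated in degree `d` satisfies the σ-exchange property with respect to a monomial order
`<^#` on `R` (for a monomial order `<_σ` on `S`), then for every `N ≥ 1` the power `I^N`
has linear quotients with respect to the decreasing `>_σ` order of its minimal monomial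
generators (`a` is listed before `b` iff `a >_σ b`). -/
theorem stmt10 {n : ℕ} (hn : 0 < n) (K : Type*) [Field K]
    (d : ℕ) (B : Set (Mon n)) (hBne : B.Nonempty) (hBd : ∀ m ∈ B, mdeg m = d)
    (σ : MonOrd (Fin n)) (o : MonOrd ↥B)
    (hex : SigmaExchange K B σ.lt o.lt) :
    ∀ N : ℕ, 1 ≤ N → LinQuotOrder (prodSet B N) (fun a b => σ.lt b a) := by
  intro N hN uj huj ui hui hlt
  rcases Nat.eq_zero_or_pos d with rfl | hd
  · -- In degree zero both generators equal `1`, so neither precedes the other.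
    have key : ∀ w ∈ prodSet B N, w = 0 := by
      intro w hw
      obtain ⟨e, he, rfl⟩ := exists_expandB_of_mem N w hw
      have h := mdeg_expandB hBd N e he
      rw [mul_zero] at h
      ext i
      exact Finset.sum_eq_zero_iff.mp h i (Finset.mem_univ i)
    rw [key _ huj, key _ hui] at hlt
    exact (σ.irrefl _ hlt).elim
  obtain ⟨e, he, rfl, hes⟩ := exists_std K hd B hBd o N ui hui
  obtain ⟨e', he', rfl, hes'⟩ := exists_std K hd B hBd o N uj huj
  obtain ⟨u, hu, q, j, hq, hj, hjq, hB⟩ := hex e e' (he.trans he'.symm) hes hes' hlt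
  obtain ⟨e₁, rfl⟩ := exists_eq_add_single e u hu
  obtain ⟨c, hc⟩ := exists_eq_add_single (u : Mon n) j hj
  have hne : j ≠ q := by
    rintro rfl
    exact σ.irrefl _ hjq
  have hv : (u : Mon n) + Finsupp.single q 1 - Finsupp.single j 1 = c + Finsupp.single q 1 := by
    rw [hc, add_right_comm, add_tsub_cancel_right]
  rw [hv] at hB
  rw [edeg_add, edeg_single] at he
  rw [expandB_add, expandB_single, hc] at hq ⊢
  refine ⟨expandB e₁ + (c + Finsupp.single q 1), ?_, ?_, q, fun p hp => ?_, ?_, hq⟩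
  · rw [← he]
    exact add_mem_prodSet (expandB_mem_prodSet _ e₁ rfl) hB
  · have h := σ.add_right _ _ (expandB e₁ + c) hjq
    rwa [add_comm, add_assoc, add_comm (Finsupp.single q 1), add_assoc] at h
  · simp [hp.symm]
  · simp [hne, add_assoc]
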